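/- Let l₁ and l₂ be lists of integers of the same length and let k be an integer. Let s₁ and s₂ denote the nondecreasing rearrangements of l₁ and l₂ respectively (i.e., sₕ is a permutation of lₕ that is sorted with respect to ≤). If for every index i < length(l₁) we have |l₁[i] − l₂[i]| ≤ k, then for every index i < length(l₁) we have |s₁[i] − s₂[i]| ≤ k. -/

import Mathlib

theorem sorted_lt_countP (y : ℤ) (s : List ℤ) (hs : s.Pairwise (· ≤ ·)) :
    ∀ i : ℕ, i < s.length → (i < s.countP (fun a => decide (a ≤ y)) ↔ s.getD i 0 ≤ y) := by
  induction s with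
  | nil => intro i hi; simp at hi
  | cons a t ih =>
    intro i hi
    rw [List.pairwise_cons] at hs
    obtain ⟨ha, ht⟩ := hs
    by_cases hay : a ≤ y
    · rw [List.countP_cons_of_pos (by simpa using hay)]
      cases i with
      | zero => simpa using hay
      | succ j =>
        have := ih ht j (by simpa using hi)
        rw [List.getD_cons_succ, ← this]
        omega
    · rw [List.countP_cons_of_neg (by simpa using hay)]
      have h0 : t.countP (fun a => decide (a ≤ y)) = 0 := by
        rw [List.countP_eq_zero]
        intro b hb
        have := ha b hb
        simp only [decide_eq_true_eq]
        omega
      rw [h0]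
      cases i with
      | zero => simpa using hay
      | succ j =>
        have hj : j < t.length := by simpa using hi
        rw [List.getD_cons_succ, List.getD_eq_getElem _ _ hj]
        have := ha _ (List.getElem_mem hj)
        omega

theorem countP_shift_le (x k : ℤ) : ∀ l₁ l₂ : List ℤ, l₁.length = l₂.length →
    (∀ i : ℕ, i < l₁.length → l₁.getD i 0 ≤ l₂.getD i 0 + k) →
    l₂.countP (fun a => decide (a ≤ x)) ≤ l₁.countP (fun a => decide (a ≤ x + k))
  | [], [], _, _ => by simp
  | [], _ :: _, h, _ => by simp at h
  | _ :: _, [], h, _ => by simp at h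
  | a :: t, b :: u, h, hk => by
    have ih := countP_shift_le x k t u (by simpa using h) (fun i hi => by
      have := hk (i + 1) (by simpa using hi)
      simpa using this)
    have h0 := hk 0 (by simp)
    simp only [List.getD_cons_zero] at h0
    simp only [List.countP_cons, decide_eq_true_eq]
    split_ifs <;> omega

theorem sorted_one_side (l₁ l₂ s₁ s₂ : List ℤ) (k : ℤ)
    (hlen : l₁.length = l₂.length)
    (hp₁ : s₁.Perm l₁) (hs₁ : s₁.Pairwise (· ≤ ·))
    (hp₂ : s₂.Perm l₂) (hs₂ : s₂.Pairwise (· ≤ ·))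
    (h : ∀ i : ℕ, i < l₁.length → l₁.getD i 0 ≤ l₂.getD i 0 + k)
    (i : ℕ) (hi : i < l₁.length) : s₁.getD i 0 ≤ s₂.getD i 0 + k := by
  have e₁ := hp₁.length_eq
  have e₂ := hp₂.length_eq
  rw [← sorted_lt_countP _ s₁ hs₁ i (by omega), hp₁.countP_eq]
  refine lt_of_lt_of_le ?_ (countP_shift_le _ k l₁ l₂ hlen h)
  rw [← hp₂.countP_eq, sorted_lt_countP _ s₂ hs₂ i (by omega)]

theorem sorting_k_lipschitz (l₁ l₂ s₁ s₂ : List ℤ) (k : ℤ)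
    (hlen : l₁.length = l₂.length)
    (hp₁ : s₁.Perm l₁) (hs₁ : s₁.Pairwise (· ≤ ·))
    (hp₂ : s₂.Perm l₂) (hs₂ : s₂.Pairwise (· ≤ ·))
    (h : ∀ i : ℕ, i < l₁.length → |l₁.getD i 0 - l₂.getD i 0| ≤ k) :
    ∀ i : ℕ, i < l₁.length → |s₁.getD i 0 - s₂.getD i 0| ≤ k := by
  intro i hi
  have a := sorted_one_side l₁ l₂ s₁ s₂ k hlen hp₁ hs₁ hp₂ hs₂
    (fun j hj => by have := abs_le.1 (h j hj); omega) i hi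
  have b := sorted_one_side l₂ l₁ s₂ s₁ k hlen.symm hp₂ hs₂ hp₁ hs₁
    (fun j hj => by have := abs_le.1 (h j (by omega)); omega) i (by omega)
  rw [abs_le]
  constructor <;> omega
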